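/- The set S₃ = {(0,0),(0,1),(1,0),(2,1),(1,2),(2,2)} ⊆ {0,1,2}² has 6 = 2·3 elements and contains no three collinear points; hence D(3) = 6. -/

import Mathlib

def Collinear3 (p q r : ℤ × ℤ) : Prop :=
  (q.1 - p.1) * (r.2 - p.2) - (q.2 - p.2) * (r.1 - p.1) = 0

def InGrid (n : ℕ) (p : ℤ × ℤ) : Prop :=
  0 ≤ p.1 ∧ p.1 < n ∧ 0 ≤ p.2 ∧ p.2 < n

def NoThreeInLine (S : Finset (ℤ × ℤ)) : Prop :=
  ∀ p ∈ S, ∀ q ∈ S, ∀ r ∈ S, p ≠ q → p ≠ r → q ≠ r → ¬ Collinear3 p q r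

/-- The explicit configuration `S₃` on the `3 × 3` grid. -/
def S₃ : Finset (ℤ × ℤ) :=
  {((0 : ℤ), (0 : ℤ)), (0, 1), (1, 0), (2, 1), (1, 2), (2, 2)}

/-! Each vertical line carries at most two points of a set without collinear triples, and `n`
vertical lines cover the `n × n` grid. Hence such a set has at most `2n` points, and a single
configuration attaining `2n`, such as `S₃` for `n = 3`, determines the maximum. -/

theorem collinear3_of_fst_eq {p q r : ℤ × ℤ} (hq : q.1 = p.1) (hr : r.1 = p.1) :
    Collinear3 p q r := by
  simp [Collinear3, hq, hr]

theorem card_image_fst_le_of_inGrid {n : ℕ} {S : Finset (ℤ × ℤ)} (hgrid : ∀ p ∈ S, InGrid n p) :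
    (S.image Prod.fst).card ≤ n := by
  have hsub : S.image Prod.fst ⊆ Finset.Ico (0 : ℤ) n :=
    Finset.image_subset_iff.2 fun p hp => Finset.mem_Ico.2 ⟨(hgrid p hp).1, (hgrid p hp).2.1⟩
  simpa using Finset.card_le_card hsub

namespace NoThreeInLine

variable {S : Finset (ℤ × ℤ)}

theorem card_filter_fst_eq_le_two (hS : NoThreeInLine S) (x : ℤ) :
    (S.filter fun p => p.1 = x).card ≤ 2 := by
  by_contra! h
  obtain ⟨p, q, r, hp, hq, hr, hpq, hpr, hqr⟩ := Finset.two_lt_card_iff.1 h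
  obtain ⟨hpS, hpx⟩ := Finset.mem_filter.1 hp
  obtain ⟨hqS, hqx⟩ := Finset.mem_filter.1 hq
  obtain ⟨hrS, hrx⟩ := Finset.mem_filter.1 hr
  exact hS p hpS q hqS r hrS hpq hpr hqr
    (collinear3_of_fst_eq (hqx.trans hpx.symm) (hrx.trans hpx.symm))

theorem card_le_two_mul_card_image_fst (hS : NoThreeInLine S) :
    S.card ≤ 2 * (S.image Prod.fst).card :=
  Finset.card_le_mul_card_image S 2 fun x _ => hS.card_filter_fst_eq_le_two x

theorem card_le_two_mul_of_inGrid {n : ℕ} (hS : NoThreeInLine S) (hgrid : ∀ p ∈ S, InGrid n p) :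
    S.card ≤ 2 * n :=
  hS.card_le_two_mul_card_image_fst.trans
    (Nat.mul_le_mul_left 2 (card_image_fst_le_of_inGrid hgrid))

theorem isGreatest_of_card_eq_two_mul {n : ℕ} (hS : NoThreeInLine S)
    (hgrid : ∀ p ∈ S, InGrid n p) (hcard : S.card = 2 * n) :
    IsGreatest {k : ℕ | ∃ T : Finset (ℤ × ℤ),
      (∀ p ∈ T, InGrid n p) ∧ NoThreeInLine T ∧ T.card = k} (2 * n) := by
  refine ⟨⟨S, hgrid, hS, hcard⟩, ?_⟩
  rintro _ ⟨T, hTgrid, hT, rfl⟩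
  exact hT.card_le_two_mul_of_inGrid hTgrid

end NoThreeInLine

theorem card_S₃ : S₃.card = 6 := by
  decide

theorem inGrid_of_mem_S₃ : ∀ p ∈ S₃, InGrid 3 p := by
  unfold InGrid
  decide

theorem noThreeInLine_S₃ : NoThreeInLine S₃ := by
  unfold NoThreeInLine Collinear3
  decide

theorem D_three_eq_six :
    S₃.card = 6 ∧ (∀ p ∈ S₃, InGrid 3 p) ∧ NoThreeInLine S₃ ∧
    IsGreatest {k : ℕ | ∃ S : Finset (ℤ × ℤ),
      (∀ p ∈ S, InGrid 3 p) ∧ NoThreeInLine S ∧ S.card = k} 6 :=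
  ⟨card_S₃, inGrid_of_mem_S₃, noThreeInLine_S₃,
    noThreeInLine_S₃.isGreatest_of_card_eq_two_mul inGrid_of_mem_S₃ card_S₃⟩
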